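/- For every m ≥ 1, the m-th symmetric power of the standard representation of SL_2(ℂ), realized as the (m+1)-dimensional representation of SL_2(ℂ) on the space of homogeneous polynomials of degree m in two variables x, y (where g ∈ SL_2(ℂ) acts by the linear substitution of variables (x, y) ↦ g⁻¹(x, y)), is thick; that is, it is m'-thick for every 0 < m' < m+1. -/

import Mathlib

/-!
By Wronskians and induction on the dimension, a `k`-dimensional space of polynomials contains, for
all but finitely many `a`, no nonzero element divisible by `(x - a) ^ k`. Hence after moving by
`SL₂` one may assume that no nonzero element of `W₁` is divisible by `x ^ dim W₁`, and that none of
`W₂` is divisible by `y ^ dim W₂`. As the two dimensions add up to `m + 1`, the first condition says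
that `W₁` is a graph over the span of the monomials of `x`-degree less than `dim W₁`, and the second
that `W₂` is a graph over the span of the others. The torus of matrices `diag (c, c⁻¹)` scales the
two groups of monomials with separated weights, so some element of it makes `W₁` disjoint from `W₂`.
-/

open Module MvPolynomial

/-- Substitution of the variables of a polynomial in two variables by the linear forms given
by the rows of a matrix `A`: the algebra map sending `X i` to `∑ j, A i j • X j`, i.e. the
linear substitution of variables `(x, y) ↦ A (x, y)`. -/
noncomputable def substPoly (A : Matrix (Fin 2) (Fin 2) ℂ) :
    MvPolynomial (Fin 2) ℂ →ₐ[ℂ] MvPolynomial (Fin 2) ℂ :=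
  aeval fun i => ∑ j, A i j • X j

lemma substPoly_mem_homogeneous (A : Matrix (Fin 2) (Fin 2) ℂ) (m : ℕ)
    (p : MvPolynomial (Fin 2) ℂ) (hp : p ∈ homogeneousSubmodule (Fin 2) ℂ m) :
    substPoly A p ∈ homogeneousSubmodule (Fin 2) ℂ m := by
  rw [mem_homogeneousSubmodule] at hp ⊢
  have hg : ∀ i, ((∑ j, A i j • X j : MvPolynomial (Fin 2) ℂ)).IsHomogeneous 1 := by
    intro i
    rw [← mem_homogeneousSubmodule]
    exact Submodule.sum_mem _ fun j _ => Submodule.smul_mem _ _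
      ((mem_homogeneousSubmodule _ _).2 (isHomogeneous_X ℂ j))
  have h := hp.aeval (fun i => ∑ j, A i j • X j) hg
  rw [one_mul] at h
  exact h

/-- The action on the space of homogeneous polynomials of degree `m` in two variables induced
by the linear substitution of variables given by the matrix `A`. -/
noncomputable def substHomogeneous (A : Matrix (Fin 2) (Fin 2) ℂ) (m : ℕ) :
    homogeneousSubmodule (Fin 2) ℂ m →ₗ[ℂ] homogeneousSubmodule (Fin 2) ℂ m :=
  (substPoly A).toLinearMap.restrict (substPoly_mem_homogeneous A m)

open scoped Polynomial Matrix

/-! ### Wronskians and the order of vanishing at a general point -/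

section Wronskian

lemma pow_dvd_wronskian {R : Type*} [CommRing R] {p g : R[X]} {k : ℕ} (h : p ^ (k + 1) ∣ g)
    (f : R[X]) : p ^ k ∣ Polynomial.wronskian f g :=
  dvd_sub ((Polynomial.pow_sub_one_dvd_derivative_of_pow_dvd h).mul_left _)
    (((pow_dvd_pow p k.le_succ).trans h).mul_left _)

lemma wronskian_mul_mul {R : Type*} [CommRing R] (d f g : R[X]) :
    Polynomial.wronskian (d * f) (d * g) = d ^ 2 * Polynomial.wronskian f g := by
  simp only [Polynomial.wronskian, Polynomial.derivative_mul]
  ring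

variable {K : Type*} [Field K]

lemma finrank_map_lt_of_mem_ker {V V' : Type*} [AddCommGroup V] [Module K V] [AddCommGroup V']
    [Module K V'] {W : Submodule K V} [FiniteDimensional K W] {f : V →ₗ[K] V'} {w : V}
    (hw : w ∈ W) (hw0 : w ≠ 0) (hfw : f w = 0) : finrank K (W.map f) < finrank K W := by
  have hker : LinearMap.ker (f.domRestrict W) ≠ ⊥ :=
    (Submodule.ne_bot_iff _).2 ⟨⟨w, hw⟩, hfw, by simpa [Subtype.ext_iff] using hw0⟩
  have hpos := Submodule.one_le_finrank_iff.2 hker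
  have hrank := (f.domRestrict W).finrank_range_add_finrank_ker
  rw [LinearMap.range_domRestrict] at hrank
  omega

variable [CharZero K]

lemma exists_eq_C_mul_of_wronskian_eq_zero {f g : K[X]} (hf : f ≠ 0)
    (h : Polynomial.wronskian f g = 0) : ∃ c : K, g = Polynomial.C c * f := by
  obtain ⟨f', g', d, hrel, rfl, rfl⟩ := UniqueFactorizationMonoid.exists_reduced_factors f hf g
  have hd : d ≠ 0 := left_ne_zero_of_mul hf
  have hf' : f' ≠ 0 := right_ne_zero_of_mul hf
  rw [wronskian_mul_mul, mul_eq_zero, or_iff_right (pow_ne_zero 2 hd),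
    hrel.isCoprime.wronskian_eq_zero_iff] at h
  obtain ⟨a, rfl⟩ := Polynomial.natDegree_eq_zero.1 (Polynomial.derivative_eq_zero.1 h.1)
  obtain ⟨b, rfl⟩ := Polynomial.natDegree_eq_zero.1 (Polynomial.derivative_eq_zero.1 h.2)
  have ha : a ≠ 0 := by simpa using hf'
  refine ⟨b / a, ?_⟩
  rw [mul_left_comm, ← Polynomial.C_mul, div_mul_cancel₀ b ha]

/-- Induction on `k`: for fixed `0 ≠ f ∈ W`, the operator `wronskian f` kills `f`, lowers the
order of vanishing by at most one, and away from the roots of `f` it does not kill any nonzero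
element of `W` that vanishes. -/
lemma finite_setOf_exists_pow_dvd {k : ℕ} (W : Submodule K K[X]) [FiniteDimensional K W]
    (hW : finrank K W ≤ k) :
    {a : K | ∃ g ∈ W, g ≠ 0 ∧ (Polynomial.X - Polynomial.C a) ^ k ∣ g}.Finite := by
  induction k generalizing W with
  | zero =>
    obtain rfl := Submodule.finrank_eq_zero.1 (Nat.le_zero.1 hW)
    simp
  | succ k ih =>
    rcases eq_or_ne W ⊥ with rfl | hbot
    · simp
    obtain ⟨f, hfW, hf⟩ := Submodule.exists_mem_ne_zero_of_ne_bot hbot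
    have hlt := finrank_map_lt_of_mem_ker (f := Polynomial.wronskianBilin K f) hfW hf
      (Polynomial.wronskian_self_eq_zero f)
    refine ((ih (W.map (Polynomial.wronskianBilin K f)) (by omega)).union
      (Polynomial.finite_setOfPred_isRoot hf)).subset ?_
    rintro a ⟨g, hgW, hg, hdvd⟩
    refine or_iff_not_imp_right.2 fun hfa => ⟨_, Submodule.mem_map_of_mem hgW, fun hfg => ?_,
      pow_dvd_wronskian hdvd f⟩
    obtain ⟨c, rfl⟩ := exists_eq_C_mul_of_wronskian_eq_zero hf hfg
    have hroot : (Polynomial.C c * f).IsRoot a :=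
      Polynomial.dvd_iff_isRoot.1 ((dvd_pow_self _ k.succ_ne_zero).trans hdvd)
    rw [Polynomial.IsRoot.def, Polynomial.eval_mul, Polynomial.eval_C, mul_eq_zero] at hroot
    exact hg (by rw [hroot.resolve_right hfa, Polynomial.C_0, zero_mul])

end Wronskian

/-! ### One-parameter diagonal contractions -/

section Contraction

variable {K : Type*} [Field K]

lemma exists_unit_forall_mulVec_eq_imp_eq_zero [Infinite K] {n : Type*} [Fintype n]
    (N : Matrix n n K[X]) (hN : N.map (Polynomial.eval 0) = 0) :
    ∃ c : Kˣ, ∀ x, N.map (Polynomial.eval (c : K)) *ᵥ x = x → x = 0 := by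
  classical
  have hdet (c : K) : (1 - N).det.eval c = (1 - N.map (Polynomial.eval c)).det := by
    rw [← Polynomial.coe_evalRingHom, RingHom.map_det, map_sub, map_one]
    rfl
  have hX : Polynomial.X * (1 - N).det ≠ 0 := by
    refine mul_ne_zero Polynomial.X_ne_zero fun h => ?_
    simpa [hN, h] using hdet 0
  obtain ⟨c, hc⟩ : ∃ c, (Polynomial.X * (1 - N).det).eval c ≠ 0 := by
    by_contra! h
    exact hX (Polynomial.funext (by simpa using h))
  rw [Polynomial.eval_mul, Polynomial.eval_X, hdet, mul_ne_zero_iff] at hc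
  refine ⟨Units.mk0 c hc.1, fun x hx => Matrix.eq_zero_of_mulVec_eq_zero hc.2 ?_⟩
  rw [Matrix.sub_mulVec, Matrix.one_mulVec, sub_eq_zero]
  exact hx.symm

/-- Divided by `c ^ e i`, the equations say that `x` is fixed by a matrix whose entries are
polynomials in `c` without constant term. -/
lemma exists_unit_forall_zpow_mul_eq_imp_eq_zero [Infinite K] {m n : Type*} [Fintype m]
    [Fintype n] (A : Matrix n m K) (B : Matrix m n K) {e : m → ℤ} {e' : n → ℤ}
    (he : ∀ i j, e i < e' j) :
    ∃ c : Kˣ, ∀ x : m → K,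
      (∀ i, (c ^ e i : Kˣ) * x i = ∑ j, B i j * ((c ^ e' j : Kˣ) * (A *ᵥ x) j)) → x = 0 := by
  let N : Matrix m m K[X] := Matrix.of fun i l =>
    ∑ j, Polynomial.C (B i j * A j l) * Polynomial.X ^ (e' j - e i).toNat
  have hN : N.map (Polynomial.eval 0) = 0 := by
    ext i l
    have hpos (j) : (e' j - e i).toNat ≠ 0 := by
      have := he i j
      omega
    simp [N, Polynomial.eval_finsetSum, hpos]
  obtain ⟨c, hc⟩ := exists_unit_forall_mulVec_eq_imp_eq_zero N hN
  refine ⟨c, fun x hx => hc x (funext fun i => ?_)⟩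
  have hpow (j) : ((c ^ e i : Kˣ) : K) * (c : K) ^ (e' j - e i).toNat = (c ^ e' j : Kˣ) := by
    rw [← Units.val_pow_eq_pow_val, ← Units.val_mul, ← zpow_natCast, ← zpow_add,
      Int.toNat_of_nonneg (sub_nonneg.2 (he i j).le), add_sub_cancel]
  refine mul_left_cancel₀ (Units.ne_zero (c ^ e i)) (Eq.trans ?_ (hx i).symm)
  simp only [N, Matrix.mulVec, dotProduct, Matrix.map_apply, Matrix.of_apply,
    Polynomial.eval_finsetSum, Polynomial.eval_mul, Polynomial.eval_pow, Polynomial.eval_C,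
    Polynomial.eval_X, Finset.sum_mul, Finset.mul_sum, ← hpow]
  rw [Finset.sum_comm]
  exact Finset.sum_congr rfl fun j _ => Finset.sum_congr rfl fun l _ => by ring

variable {V : Type*} [AddCommGroup V] [Module K V]

lemma exists_matrix_mulVec_eq_of_disjoint_ker {m n : Type*} [Fintype m] [Finite n]
    {W : Submodule K V} {p : V →ₗ[K] m → K} (hp : Disjoint W (LinearMap.ker p))
    (q : V →ₗ[K] n → K) : ∃ A : Matrix n m K, ∀ w ∈ W, q w = A *ᵥ p w := by
  classical
  have hker : LinearMap.ker (p.domRestrict W) = ⊥ := by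
    rwa [LinearMap.ker_domRestrict, ← Submodule.disjoint_iff_comap_eq_bot]
  obtain ⟨r, hr⟩ := (p.domRestrict W).exists_leftInverse_of_injective hker
  refine ⟨LinearMap.toMatrix' (q ∘ₗ W.subtype ∘ₗ r), fun w hw => ?_⟩
  have hrw : r (p w) = ⟨w, hw⟩ := LinearMap.congr_fun hr ⟨w, hw⟩
  simp [LinearMap.toMatrix'_mulVec, hrw]

/-- The hypotheses say that `W₁` and `W₂` lie in graphs of linear maps `K^S → K^Sᶜ` and
`K^Sᶜ → K^S`. As `c` tends to `0`, the operator `T c` contracts the first graph onto `K^S`. -/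
theorem exists_disjoint_map_of_repr_eq_zpow_mul [Infinite K] {ι : Type*} [Finite ι]
    (b : Basis ι K V) (T : Kˣ → V →ₗ[K] V) (e : ι → ℤ)
    (hT : ∀ c v i, b.repr (T c v) i = (c ^ e i : Kˣ) * b.repr v i)
    (S : Set ι) (hS : ∀ i ∈ S, ∀ j ∉ S, e i < e j) {W₁ W₂ : Submodule K V}
    (h₁ : ∀ w ∈ W₁, (∀ i ∈ S, b.repr w i = 0) → w = 0)
    (h₂ : ∀ w ∈ W₂, (∀ i ∉ S, b.repr w i = 0) → w = 0) :
    ∃ c : Kˣ, Disjoint (W₁.map (T c)) W₂ := by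
  classical
  have := Fintype.ofFinite ι
  let p : V →ₗ[K] S → K := LinearMap.pi fun i => b.coord i
  let q : V →ₗ[K] ↥Sᶜ → K := LinearMap.pi fun i => b.coord i
  have hp : ∀ w ∈ W₁, p w = 0 → w = 0 := fun w hw h =>
    h₁ w hw fun i hi => congrFun h ⟨i, hi⟩
  have hq : ∀ w ∈ W₂, q w = 0 → w = 0 := fun w hw h =>
    h₂ w hw fun i hi => congrFun h ⟨i, hi⟩
  obtain ⟨A, hA⟩ := exists_matrix_mulVec_eq_of_disjoint_ker (LinearMap.disjoint_ker.2 hp) q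
  obtain ⟨B, hB⟩ := exists_matrix_mulVec_eq_of_disjoint_ker (LinearMap.disjoint_ker.2 hq) p
  obtain ⟨c, hc⟩ := exists_unit_forall_zpow_mul_eq_imp_eq_zero A B
    fun (i : S) (j : ↥Sᶜ) => hS i i.2 j j.2
  refine ⟨c, Submodule.disjoint_def.2 ?_⟩
  rintro _ ⟨w, hw, rfl⟩ hTw
  suffices p w = 0 by rw [hp w hw this, map_zero]
  refine hc _ fun i => ?_
  calc (c ^ e i : Kˣ) * p w i
      = p (T c w) i := (hT c w i).symm
    _ = ∑ j, B i j * q (T c w) j := congrFun (hB _ hTw) i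
    _ = ∑ j : ↥Sᶜ, B i j * ((c ^ e j : Kˣ) * q w j) :=
        Finset.sum_congr rfl fun j _ => congrArg (B i j * ·) (hT c w j)
    _ = ∑ j : ↥Sᶜ, B i j * ((c ^ e j : Kˣ) * (A *ᵥ p w) j) := by rw [hA w hw]

end Contraction

/-! ### Thick representations -/

section Thick

variable {K G V : Type*} [Field K] [Group G] [AddCommGroup V] [Module K V]

/-- The representation `ρ` is `k`-thick: any `k`-dimensional subspace can be moved by the group to
a complement of any given subspace of codimension `k`. -/
def IsThickAt (ρ : Representation K G V) (k : ℕ) : Prop :=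
  ∀ W₁ W₂ : Submodule K V, finrank K W₁ = k → finrank K W₂ = finrank K V - k →
    ∃ g : G, IsCompl (W₁.map (ρ g)) W₂

/-- The representation `ρ` is thick: it is `k`-thick for all `k` strictly between `0` and its
dimension. -/
def IsThick (ρ : Representation K G V) : Prop :=
  ∀ k, 0 < k → k < finrank K V → IsThickAt ρ k

lemma isThick_of_exists_disjoint_map_map [FiniteDimensional K V] {ρ : Representation K G V}
    (h : ∀ W₁ W₂ : Submodule K V, finrank K W₁ + finrank K W₂ = finrank K V →
      ∃ g₁ g₂ : G, Disjoint (W₁.map (ρ g₁)) (W₂.map (ρ g₂))) : IsThick ρ := by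
  intro k _ hk W₁ W₂ hW₁ hW₂
  have hdim : finrank K W₁ + finrank K W₂ = finrank K V := by omega
  obtain ⟨g₁, g₂, hdisj⟩ := h W₁ W₂ hdim
  refine ⟨g₂⁻¹ * g₁, (Submodule.isCompl_iff_disjoint _ _ ?_).2 ?_⟩
  · rw [← (Submodule.equivMapOfInjective _ (ρ.apply_bijective _).injective W₁).finrank_eq, hdim]
  · have h := Submodule.disjoint_map (ρ.apply_bijective g₂⁻¹).injective hdisj
    rwa [← Submodule.map_comp, ← Submodule.map_comp, ← Module.End.mul_eq_comp,
      ← Module.End.mul_eq_comp, ← map_mul, ← map_mul, inv_mul_cancel, map_one,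
      Module.End.one_eq_id, Submodule.map_id] at h

end Thick

/-! ### Linear substitutions in homogeneous polynomials -/

section LinearSubst

variable {σ R : Type*} [Fintype σ] [CommRing R]

/-- The linear substitution of variables `X i ↦ ∑ j, A i j • X j`. -/
noncomputable def linearSubst (A : Matrix σ σ R) : MvPolynomial σ R →ₐ[R] MvPolynomial σ R :=
  bind₁ A.toMvPolynomial

lemma linearSubst_X (A : Matrix σ σ R) (i : σ) :
    linearSubst A (X i) = ∑ j, C (A i j) * X j := by
  simp [linearSubst, Matrix.toMvPolynomial, C_mul_X_eq_monomial]

lemma linearSubst_linearSubst (A B : Matrix σ σ R) (p : MvPolynomial σ R) :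
    linearSubst A (linearSubst B p) = linearSubst (B * A) p := by
  have hBA : (B * A).toMvPolynomial = fun i => bind₁ A.toMvPolynomial (B.toMvPolynomial i) :=
    funext (Matrix.toMvPolynomial_mul B A)
  rw [linearSubst, linearSubst, linearSubst, hBA, bind₁_bind₁]

lemma linearSubst_one [DecidableEq σ] (p : MvPolynomial σ R) :
    linearSubst (1 : Matrix σ σ R) p = p := by
  simp [linearSubst]

lemma coeff_linearSubst_diagonal [DecidableEq σ] (t : σ → R) (p : MvPolynomial σ R)
    (d : σ →₀ ℕ) :
    (linearSubst (Matrix.diagonal t) p).coeff d = (∏ i, t i ^ d i) * p.coeff d := by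
  have hX (i : σ) : linearSubst (Matrix.diagonal t) (X i) = C (t i) * X i := by
    simp [linearSubst_X, Matrix.diagonal_apply, apply_ite C, ite_mul]
  induction p using MvPolynomial.induction_on' with
  | monomial u a =>
    have hmon : linearSubst (Matrix.diagonal t) (monomial u a) =
        C (∏ i, t i ^ u i) * monomial u a := by
      rw [monomial_eq, Finsupp.prod_fintype _ _ fun i => pow_zero _]
      simp only [map_mul, map_prod, map_pow, hX, mul_pow, Finset.prod_mul_distrib, algHom_C,
        algebraMap_eq]
      exact mul_left_comm _ _ _
    rw [hmon, coeff_C_mul, coeff_monomial]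
    split_ifs with h
    · rw [h]
    · simp only [mul_zero]
  | add p q hp hq => rw [map_add, coeff_add, coeff_add, hp, hq, mul_add]

lemma isHomogeneous_linearSubst (A : Matrix σ σ R) {p : MvPolynomial σ R} {m : ℕ}
    (hp : p.IsHomogeneous m) : (linearSubst A p).IsHomogeneous m := by
  have h := hp.aeval _ A.toMvPolynomial_isHomogeneous
  rw [one_mul] at h
  exact h

variable [DecidableEq σ]

/-- The representation of `SL(σ, R)` on forms of degree `m` in the variables `σ`, in which `g`
substitutes `g⁻¹` into the variables. For two variables this is the `m`-th symmetric power of the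
standard representation. -/
noncomputable def homogeneousRep (σ R : Type*) [Fintype σ] [DecidableEq σ] [CommRing R] (m : ℕ) :
    Representation R (Matrix.SpecialLinearGroup σ R) (homogeneousSubmodule σ R m) where
  toFun g := (linearSubst (g⁻¹ : Matrix.SpecialLinearGroup σ R).1).toLinearMap.restrict
    fun _ hp => isHomogeneous_linearSubst _ hp
  map_one' := by
    ext p : 2
    simp [linearSubst_one]
  map_mul' g h := by
    ext p : 2
    simp [linearSubst_linearSubst]

lemma coe_homogeneousRep_apply {m : ℕ} (g : Matrix.SpecialLinearGroup σ R)
    (p : homogeneousSubmodule σ R m) :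
    (homogeneousRep σ R m g p : MvPolynomial σ R) =
      linearSubst (g⁻¹ : Matrix.SpecialLinearGroup σ R).1 p :=
  rfl

end LinearSubst

/-! ### Forms and their coefficients -/

section Forms

variable {σ R : Type*} [CommRing R]

/-- The basis of the space of forms of degree `m` given by the monomials of degree `m`. -/
noncomputable def homogeneousBasis (σ R : Type*) [CommRing R] (m : ℕ) :
    Basis {d : σ →₀ ℕ | d.degree = m} R (homogeneousSubmodule σ R m) :=
  (basisRestrictSupport R {d : σ →₀ ℕ | d.degree = m}).map
    (LinearEquiv.ofEq _ _ (homogeneousSubmodule_eq_finsupp_supported σ R m).symm)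

lemma homogeneousBasis_repr_apply {m : ℕ} (p : homogeneousSubmodule σ R m)
    (d : {d : σ →₀ ℕ | d.degree = m}) :
    (homogeneousBasis σ R m).repr p d = (p : MvPolynomial σ R).coeff d :=
  rfl

instance finite_homogeneousSubmodule [Finite σ] (m : ℕ) :
    Module.Finite R (homogeneousSubmodule σ R m) :=
  Module.Finite.iff_fg.2 (homogeneousSubmodule_fg σ R m)

lemma finrank_homogeneousSubmodule [Fintype σ] [Nontrivial R] (m : ℕ) :
    finrank R (homogeneousSubmodule σ R m) = (Fintype.card σ + m - 1).choose m := by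
  classical
  have hset : {d : σ →₀ ℕ | d.degree = m} = (Finset.univ : Finset σ).finsuppAntidiag m := by
    ext d
    simp [Finset.mem_finsuppAntidiag, Finsupp.degree_eq_sum]
  rw [finrank_eq_nat_card_basis (homogeneousBasis σ R m), hset, Nat.card_eq_fintype_card]
  simp [Finset.card_finsuppAntidiag_nat_eq_choose]

lemma finrank_homogeneousSubmodule_fin_two [Nontrivial R] (m : ℕ) :
    finrank R (homogeneousSubmodule (Fin 2) R m) = m + 1 := by
  rw [finrank_homogeneousSubmodule, Fintype.card_fin, show 2 + m - 1 = m + 1 by omega,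
    Nat.choose_succ_self_right]

lemma X_pow_dvd_iff_coeff_eq_zero {i : σ} {k : ℕ} {p : MvPolynomial σ R} :
    X i ^ k ∣ p ↔ ∀ d : σ →₀ ℕ, d i < k → p.coeff d = 0 := by
  rw [X_pow_eq_monomial, monomial_one_dvd_iff_modMonomial_eq_zero, MvPolynomial.ext_iff]
  refine forall_congr' fun d => ?_
  by_cases h : k ≤ d i
  · simp [coeff_modMonomial_of_le p (Finsupp.single_le_iff.2 h), h.not_gt]
  · simp [coeff_modMonomial_of_not_le p (mt Finsupp.single_le_iff.1 h), not_le.1 h]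

lemma X_pow_dvd_iff_homogeneousBasis_repr_eq_zero {m k : ℕ} {i : σ}
    {p : homogeneousSubmodule σ R m} :
    X i ^ k ∣ (p : MvPolynomial σ R) ↔
      ∀ d : {d : σ →₀ ℕ | d.degree = m}, d.1 i < k → (homogeneousBasis σ R m).repr p d = 0 := by
  rw [X_pow_dvd_iff_coeff_eq_zero]
  refine ⟨fun h d => h d, fun h d hd => by_contra fun hne => hne (h ⟨d, ?_⟩ hd)⟩
  rw [Set.mem_ofPred_eq, Finsupp.degree_eq_weight_one]
  exact p.2 hne

lemma aeval_X_one_injOn_homogeneousSubmodule (m : ℕ) :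
    Set.InjOn (aeval ![(Polynomial.X : R[X]), 1])
      (homogeneousSubmodule (Fin 2) R m : Set (MvPolynomial (Fin 2) R)) :=
  fun _ hp _ hq h => (Polynomial.homogenize_eq_of_isHomogeneous hp rfl).symm.trans
    (h ▸ Polynomial.homogenize_eq_of_isHomogeneous hq rfl)

end Forms

/-! ### Binary forms -/

section BinaryForms

variable {K : Type*} [Field K] {m : ℕ}

lemma coeff_homogeneousRep_diag2_inv (c : Kˣ)
    (p : homogeneousSubmodule (Fin 2) K m) (d : Fin 2 →₀ ℕ) :
    (homogeneousRep (Fin 2) K m (Matrix.SpecialLinearGroup.diag2 (c : K) c.ne_zero)⁻¹ p :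
      MvPolynomial (Fin 2) K).coeff d = (c ^ (d 0 - d 1 : ℤ) : Kˣ) * coeff d p.1 := by
  rw [coe_homogeneousRep_apply, inv_inv, Matrix.SpecialLinearGroup.diag2_coe,
    coeff_linearSubst_diagonal, Fin.prod_univ_two, zpow_sub]
  simp

variable [CharZero K]

lemma exists_forall_mem_linear_pow_dvd_imp_eq_zero
    (W : Submodule K (homogeneousSubmodule (Fin 2) K m)) :
    ∃ a : K, ∀ w ∈ W, (X 0 - C a * X 1) ^ finrank K W ∣ (w : MvPolynomial (Fin 2) K) → w = 0 := by
  let φ : homogeneousSubmodule (Fin 2) K m →ₗ[K] K[X] :=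
    (aeval ![Polynomial.X, 1]).toLinearMap.domRestrict _
  have hφ : Function.Injective φ := fun p q h =>
    Subtype.ext (aeval_X_one_injOn_homogeneousSubmodule m p.2 q.2 h)
  obtain ⟨a, ha⟩ := (finite_setOf_exists_pow_dvd (W.map φ)
    (Submodule.finrank_map_le φ W)).exists_notMem
  refine ⟨a, fun w hw hdvd => by_contra fun hw0 => ha ⟨φ w, Submodule.mem_map_of_mem hw,
    (map_ne_zero_iff φ hφ).2 hw0, ?_⟩⟩
  simpa [φ] using map_dvd (aeval ![(Polynomial.X : K[X]), 1]) hdvd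

lemma exists_forall_mem_map_X_pow_dvd_imp_eq_zero (i : Fin 2)
    (W : Submodule K (homogeneousSubmodule (Fin 2) K m)) :
    ∃ g : Matrix.SpecialLinearGroup (Fin 2) K, ∀ w ∈ W.map (homogeneousRep (Fin 2) K m g),
      X i ^ finrank K W ∣ (w : MvPolynomial (Fin 2) K) → w = 0 := by
  obtain ⟨a, ha⟩ := exists_forall_mem_linear_pow_dvd_imp_eq_zero W
  obtain ⟨g, hg0, hg1⟩ := (isCoprime_one_left (x := -a)).exists_SL2_row i
  refine ⟨g, ?_⟩
  rintro _ ⟨w, hw, rfl⟩ hdvd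
  rw [ha w hw, map_zero]
  have hX : linearSubst g.1 (X i) = X 0 - C a * X 1 := by
    simp [linearSubst_X, hg0, hg1, sub_eq_add_neg]
  have hgw : linearSubst g.1 (homogeneousRep (Fin 2) K m g w) = w := by
    rw [coe_homogeneousRep_apply, linearSubst_linearSubst, ← Matrix.SpecialLinearGroup.coe_mul,
      inv_mul_cancel, Matrix.SpecialLinearGroup.coe_one, linearSubst_one]
  rw [← hX, ← map_pow, ← hgw]
  exact map_dvd _ hdvd

theorem exists_disjoint_map_map_homogeneousRep
    (W₁ W₂ : Submodule K (homogeneousSubmodule (Fin 2) K m))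
    (hW : finrank K W₁ + finrank K W₂ ≤ m + 1) :
    ∃ g₁ g₂ : Matrix.SpecialLinearGroup (Fin 2) K,
      Disjoint (W₁.map (homogeneousRep (Fin 2) K m g₁))
        (W₂.map (homogeneousRep (Fin 2) K m g₂)) := by
  obtain ⟨g₁, hg₁⟩ := exists_forall_mem_map_X_pow_dvd_imp_eq_zero 0 W₁
  obtain ⟨g₂, hg₂⟩ := exists_forall_mem_map_X_pow_dvd_imp_eq_zero 1 W₂
  have := (Finsupp.finite_of_degree_eq (σ := Fin 2) m).to_subtype
  have hdeg (d : {d : Fin 2 →₀ ℕ | d.degree = m}) : d.1 0 + d.1 1 = m := by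
    rw [← Fin.sum_univ_two, ← Finsupp.degree_eq_sum]
    exact d.2
  let S : Set {d : Fin 2 →₀ ℕ | d.degree = m} := {d | d.1 0 < finrank K W₁}
  have hS : ∀ d ∈ S, ∀ d' ∉ S, (d.1 0 - d.1 1 : ℤ) < d'.1 0 - d'.1 1 := fun d hd d' hd' => by
    have hlt : d.1 0 < finrank K W₁ := hd
    have hle : finrank K W₁ ≤ d'.1 0 := not_lt.1 hd'
    have := hdeg d
    have := hdeg d'
    omega
  have hSc (d) (hd : d.1 1 < finrank K W₂) : d ∉ S := fun hlt : d.1 0 < finrank K W₁ => by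
    have := hdeg d
    omega
  obtain ⟨c, hc⟩ := exists_disjoint_map_of_repr_eq_zpow_mul (homogeneousBasis (Fin 2) K m)
    (fun c => homogeneousRep (Fin 2) K m (Matrix.SpecialLinearGroup.diag2 (c : K) c.ne_zero)⁻¹) _
    (fun c p d => coeff_homogeneousRep_diag2_inv c p d) S hS
    (fun w hw h => hg₁ w hw (X_pow_dvd_iff_homogeneousBasis_repr_eq_zero.2 h))
    (fun w hw h => hg₂ w hw (X_pow_dvd_iff_homogeneousBasis_repr_eq_zero.2
      fun d hd => h d (hSc d hd)))
  refine ⟨(Matrix.SpecialLinearGroup.diag2 (c : K) c.ne_zero)⁻¹ * g₁, g₂, ?_⟩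
  rwa [map_mul, Module.End.mul_eq_comp, Submodule.map_comp]

end BinaryForms

theorem symmPower_sl2_thick_general (K : Type*) [Field K] [CharZero K] (m : ℕ) :
    IsThick (homogeneousRep (Fin 2) K m) :=
  isThick_of_exists_disjoint_map_map fun W₁ W₂ hW =>
    exists_disjoint_map_map_homogeneousRep W₁ W₂
      (hW.trans (finrank_homogeneousSubmodule_fin_two m)).le

lemma substHomogeneous_inv_eq_homogeneousRep (g : Matrix.SpecialLinearGroup (Fin 2) ℂ) (m : ℕ) :
    substHomogeneous (g : Matrix (Fin 2) (Fin 2) ℂ)⁻¹ m = homogeneousRep (Fin 2) ℂ m g := by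
  have hsubst (A : Matrix (Fin 2) (Fin 2) ℂ) : substPoly A = linearSubst A :=
    algHom_ext fun i => by simp [substPoly, linearSubst_X, smul_eq_C_mul]
  ext p : 2
  have hinv : (g : Matrix (Fin 2) (Fin 2) ℂ)⁻¹ = (g⁻¹ : Matrix.SpecialLinearGroup (Fin 2) ℂ) :=
    Matrix.inv_eq_left_inv (by
      rw [← Matrix.SpecialLinearGroup.coe_mul, inv_mul_cancel, Matrix.SpecialLinearGroup.coe_one])
  rw [coe_homogeneousRep_apply, ← hsubst, hinv]
  rfl

/-- For `m ≥ 1`, the `m`-th symmetric power of the standard representation of `SL_2(ℂ)`,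
realized as the `(m+1)`-dimensional space of homogeneous polynomials of degree `m` in two
variables on which a matrix `A` of determinant `1` acts by the substitution of variables
`(x, y) ↦ A⁻¹ (x, y)`, is thick: for every `0 < m' < m + 1` and all subspaces `W₁, W₂` with
`dim W₁ = m'` and `dim W₂ = (m + 1) - m'`, some `A ∈ SL_2(ℂ)` moves `W₁` to a complement
of `W₂`. -/
theorem symmPower_sl2_thick (m : ℕ) (hm : 1 ≤ m) (m' : ℕ) (h0 : 0 < m') (h1 : m' < m + 1)
    (W₁ W₂ : Submodule ℂ (homogeneousSubmodule (Fin 2) ℂ m))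
    (d₁ : finrank ℂ W₁ = m') (d₂ : finrank ℂ W₂ = (m + 1) - m') :
    ∃ A : Matrix (Fin 2) (Fin 2) ℂ, A.det = 1 ∧
      IsCompl (W₁.map (substHomogeneous A⁻¹ m)) W₂ := by
  rw [← finrank_homogeneousSubmodule_fin_two (R := ℂ) m] at h1 d₂
  obtain ⟨g, hg⟩ := symmPower_sl2_thick_general ℂ m m' h0 h1 W₁ W₂ d₁ d₂
  exact ⟨g, g.det_coe, by rwa [substHomogeneous_inv_eq_homogeneousRep]⟩
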